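/- arXiv:1311.2011 — 5 statements merged into one kernel-verified Lean document; each statement's English description precedes it below -/
import Mathlib

section
/- Let X be a Tychonoff topological space, let 𝔅 be a bornology with compact base on X, and let 𝒰 be a nontrivial open 𝔅-cover of X. Then the set A = {f ∈ C(X,ℝ) : there exists U ∈ 𝒰 with f(x) = 1 for all x ∈ X ∖ U} satisfies A ⊆ C(X,ℝ) ∖ {0̄} and 0̄ lies in the closure of A in C_𝔅(X); that is, A ∈ Ω_{0̄}. -/
open Set Topology

universe u

/-- A bornology on `X`: a collection of subsets covering `X`, closed under
taking subsets and under finite unions. -/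
structure IsBornology {X : Type*} (𝔅 : Set (Set X)) : Prop where
  covers : ⋃₀ 𝔅 = Set.univ
  empty_mem : ∅ ∈ 𝔅
  subset_mem : ∀ ⦃A B : Set X⦄, B ∈ 𝔅 → A ⊆ B → A ∈ 𝔅
  union_mem : ∀ ⦃A B : Set X⦄, A ∈ 𝔅 → B ∈ 𝔅 → A ∪ B ∈ 𝔅

/-- `𝔅` has a compact base: every member of `𝔅` is contained in a compact member of `𝔅`. -/
def HasCompactBase {X : Type*} [TopologicalSpace X] (𝔅 : Set (Set X)) : Prop :=
  ∀ B ∈ 𝔅, ∃ K ∈ 𝔅, IsCompact K ∧ B ⊆ K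

/-- The set of continuous real-valued functions on `X` (as a bare type, to be
topologized by a bornology). -/
def CFn (X : Type u) [TopologicalSpace X] : Type u := {f : X → ℝ // Continuous f}

/-- The zero function as an element of `CFn X`. -/
def zeroFn (X : Type u) [TopologicalSpace X] : CFn X := ⟨fun _ => 0, continuous_const⟩

/-- The basic "ball" `⟨B, ε⟩[f] = {g : ∀ x ∈ B, |f x − g x| < ε}`. -/
def unifBall {X : Type u} [TopologicalSpace X] (f : CFn X) (B : Set X) (ε : ℝ) :
    Set (CFn X) :=
  {g | ∀ x ∈ B, |f.1 x - g.1 x| < ε}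

/-- The topology of uniform convergence on members of a bornology `𝔅`:
a set is open iff around each of its points it contains a basic ball
`⟨B, ε⟩[f]` with `B ∈ 𝔅`, `ε > 0`.  This makes `CFn X` into `C_𝔅(X)`. -/
def bornTopology {X : Type u} [TopologicalSpace X] (𝔅 : Set (Set X))
    (hB : IsBornology 𝔅) : TopologicalSpace (CFn X) where
  IsOpen U := ∀ f ∈ U, ∃ B ∈ 𝔅, ∃ ε > (0 : ℝ), unifBall f B ε ⊆ U
  isOpen_univ := fun f _ => ⟨∅, hB.empty_mem, 1, one_pos, fun _ _ => trivial⟩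
  isOpen_inter := by
    intro U V hU hV f hf
    obtain ⟨B₁, hB₁, ε₁, hε₁, h₁⟩ := hU f hf.1
    obtain ⟨B₂, hB₂, ε₂, hε₂, h₂⟩ := hV f hf.2
    refine ⟨B₁ ∪ B₂, hB.union_mem hB₁ hB₂, min ε₁ ε₂, lt_min hε₁ hε₂, fun g hg => ⟨?_, ?_⟩⟩
    · exact h₁ fun x hx => lt_of_lt_of_le (hg x (Or.inl hx)) (min_le_left _ _)
    · exact h₂ fun x hx => lt_of_lt_of_le (hg x (Or.inr hx)) (min_le_right _ _)
  isOpen_sUnion := by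
    intro S hS f hf
    obtain ⟨U, hU, hfU⟩ := hf
    obtain ⟨B, hB', ε, hε, h⟩ := hS U hU f hfU
    exact ⟨B, hB', ε, hε, h.trans (Set.subset_sUnion_of_mem hU)⟩

/-- `Ω_z`: the family of all subsets of `Z ∖ {z}` having `z` in their closure. -/
def OmegaAt {Z : Type*} [TopologicalSpace Z] (z : Z) : Set (Set Z) :=
  {A | A ⊆ {z}ᶜ ∧ z ∈ closure A}

/-- `𝒢` is a `𝔅`-cover of `X`: every member of `𝔅` is contained in a member of `𝒢`. -/
def IsBCover {X : Type*} (𝔅 : Set (Set X)) (𝒢 : Set (Set X)) : Prop :=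
  ∀ B ∈ 𝔅, ∃ G ∈ 𝒢, B ⊆ G

/-- `𝒪_𝔅`: the family of all open `𝔅`-covers of `X`. -/
def OpenBCovers {X : Type*} [TopologicalSpace X] (𝔅 : Set (Set X)) : Set (Set (Set X)) :=
  {𝒰 | (∀ U ∈ 𝒰, IsOpen U) ∧ IsBCover 𝔅 𝒰}

/-- `𝒢` is a K-cover of `X`: every compact subset of `X` is contained in a member of `𝒢`. -/
def IsKCover {X : Type*} [TopologicalSpace X] (𝒢 : Set (Set X)) : Prop :=
  ∀ K : Set X, IsCompact K → ∃ G ∈ 𝒢, K ⊆ G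

/-- `𝒦`: the family of all open K-covers of `X`. -/
def KCovers (X : Type*) [TopologicalSpace X] : Set (Set (Set X)) :=
  {𝒰 | (∀ U ∈ 𝒰, IsOpen U) ∧ IsKCover 𝒰}

/-- Player II has a winning strategy in the game `G₁(𝒜, 𝒞)` (of length `ω`):
a function assigning to each finite sequence `(A₀, …, Aₙ)` of moves of player I an
element of `Aₙ`, such that in any play following it the chosen points form a member of `𝒞`. -/
def G1WinII {T : Type*} (𝒜 𝒞 : Set (Set T)) : Prop :=
  ∃ σ : (n : ℕ) → (Fin (n + 1) → Set T) → T,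
    (∀ (n : ℕ) (h : Fin (n + 1) → Set T), (∀ i, h i ∈ 𝒜) → σ n h ∈ h (Fin.last n)) ∧
    ∀ A : ℕ → Set T, (∀ n, A n ∈ 𝒜) →
      (Set.range fun n => σ n fun i => A i.1) ∈ 𝒞

/-- Player II has a winning strategy in the transfinite game `G₁^α(𝒜, 𝒞)` of length `α`. -/
def G1WinIIOrd {T : Type*} (α : Ordinal.{0}) (𝒜 𝒞 : Set (Set T)) : Prop :=
  ∃ σ : (γ : {γ : Ordinal.{0} // γ < α}) → ({δ : Ordinal.{0} // δ ≤ γ.1} → Set T) → T,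
    (∀ (γ : {γ : Ordinal.{0} // γ < α}) (h : {δ : Ordinal.{0} // δ ≤ γ.1} → Set T),
      (∀ δ, h δ ∈ 𝒜) → σ γ h ∈ h ⟨γ.1, le_rfl⟩) ∧
    ∀ A : {γ : Ordinal.{0} // γ < α} → Set T, (∀ γ, A γ ∈ 𝒜) →
      (Set.range fun γ : {γ : Ordinal.{0} // γ < α} =>
        σ γ fun δ => A ⟨δ.1, lt_of_le_of_lt δ.2 γ.2⟩) ∈ 𝒞

/-- The selection principle `S₁(𝒜, 𝒞)`. -/
def S1 {T : Type*} (𝒜 𝒞 : Set (Set T)) : Prop :=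
  ∀ A : ℕ → Set T, (∀ n, A n ∈ 𝒜) →
    ∃ a : ℕ → T, (∀ n, a n ∈ A n) ∧ Set.range a ∈ 𝒞

/-- `Z` has countable tightness. -/
def CountablyTight (Z : Type*) [TopologicalSpace Z] : Prop :=
  ∀ (z : Z) (A : Set Z), z ∈ closure A → ∃ B ⊆ A, B.Countable ∧ z ∈ closure B

/-- `Z` is productively countably tight: `Z × Y` has countable tightness
for every countably tight space `Y`. -/
def ProductivelyCountablyTight (Z : Type u) [TopologicalSpace Z] : Prop :=
  ∀ (Y : Type u) [TopologicalSpace Y], CountablyTight Y → CountablyTight (Z × Y)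

/-- `Z` has tightness at most `κ`. -/
def TightnessLE (Z : Type u) [TopologicalSpace Z] (κ : Cardinal.{u}) : Prop :=
  ∀ (z : Z) (A : Set Z), z ∈ closure A → ∃ B ⊆ A, Cardinal.mk B ≤ κ ∧ z ∈ closure B

/-- `κ ∈ Sp(Z)`: for every space `Y` of tightness at most `κ`, the product `Z × Y`
has tightness at most `κ`. -/
def MemSp (Z : Type u) [TopologicalSpace Z] (κ : Cardinal.{u}) : Prop :=
  ∀ (Y : Type u) [TopologicalSpace Y], TightnessLE Y κ → TightnessLE (Z × Y) κ

/-- `G` is a `G_κ`-set: an intersection of at most `κ` open sets. -/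
def IsGKappaSet {X : Type u} [TopologicalSpace X] (κ : Cardinal.{u}) (G : Set X) : Prop :=
  ∃ 𝒪 : Set (Set X), (∀ O ∈ 𝒪, IsOpen O) ∧ Cardinal.mk 𝒪 ≤ κ ∧ G = ⋂₀ 𝒪

/-- `G` is a `G_δ`-set: an intersection of countably many open sets. -/
def IsGDeltaSet {X : Type*} [TopologicalSpace X] (G : Set X) : Prop :=
  ∃ 𝒪 : Set (Set X), (∀ O ∈ 𝒪, IsOpen O) ∧ 𝒪.Countable ∧ G = ⋂₀ 𝒪

/-- A family `ℙ` of collections of subsets of `Z` is `κ`-singular at `z`. -/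
def KappaSingularAt {Z : Type u} [TopologicalSpace Z] (κ : Cardinal.{u})
    (ℙ : Set (Set (Set Z))) (z : Z) : Prop :=
  (∀ ξ ∈ ℙ, ∀ A ∈ ξ, Cardinal.mk A ≤ κ) ∧
  (∀ ξ ∈ ℙ, ∀ F : Finset (Set Z), ↑F ⊆ ξ → (⋂₀ (F : Set (Set Z))).Nonempty) ∧
  (∀ O : Set Z, IsOpen O → z ∈ O → ∃ ξ ∈ ℙ, ∃ A ∈ ξ, A ⊆ O) ∧
  (∀ ℰ ⊆ ℙ, Cardinal.mk ℰ ≤ κ → ∃ c : Set (Set Z) → Set Z,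
    (∀ ξ ∈ ℰ, c ξ ∈ ξ) ∧ z ∉ closure (⋃ ξ ∈ ℰ, c ξ))

/-- `X` is an Alster space. -/
def Alster (X : Type*) [TopologicalSpace X] : Prop :=
  ∀ 𝒢 : Set (Set X), (∀ G ∈ 𝒢, IsGDeltaSet G) → IsKCover 𝒢 →
    ∃ 𝒢' ⊆ 𝒢, 𝒢'.Countable ∧ ⋃₀ 𝒢' = Set.univ

/-- `X` is strongly Alster. -/
def StronglyAlster (X : Type*) [TopologicalSpace X] : Prop :=
  ∀ 𝒢 : Set (Set X), (∀ G ∈ 𝒢, IsGDeltaSet G) → IsKCover 𝒢 →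
    ∃ 𝒢' ⊆ 𝒢, 𝒢'.Countable ∧ IsKCover 𝒢'

/-- `X` is productively Lindelöf. -/
def ProductivelyLindelof (X : Type u) [TopologicalSpace X] : Prop :=
  ∀ (Y : Type u) [TopologicalSpace Y], LindelofSpace Y → LindelofSpace (X × Y)

/-- `X` is hemicompact. -/
def Hemicompact (X : Type*) [TopologicalSpace X] : Prop :=
  ∃ K : ℕ → Set X, (∀ n, IsCompact (K n)) ∧ ∀ C : Set X, IsCompact C → ∃ n, C ⊆ K n

theorem aux_sep {X : Type u} [TopologicalSpace X] [T35Space X] {K U : Set X}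
    (hK : IsCompact K) (hU : IsOpen U) (hKU : K ⊆ U) :
    ∃ f : X → ℝ, Continuous f ∧ (∀ x ∈ K, f x = 0) ∧ ∀ x ∉ U, f x = 1 := by
  have hi : IsInducing (stoneCechUnit : X → StoneCech X) := isInducing_stoneCechUnit
  obtain ⟨V, hV, rfl⟩ := hi.isOpen_iff.1 hU
  have hc : IsClosed (stoneCechUnit '' K) := (hK.image hi.continuous).isClosed
  have hd : Disjoint (stoneCechUnit '' K) Vᶜ := by
    rw [Set.disjoint_compl_right_iff_subset]
    exact Set.image_subset_iff.2 hKU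
  obtain ⟨f, h0, h1, -⟩ := exists_continuous_zero_one_of_isClosed hc hV.isClosed_compl hd
  exact ⟨fun x => f (stoneCechUnit x), f.continuous.comp hi.continuous,
    fun x hx => h0 (Set.mem_image_of_mem _ hx), fun x hx => h1 hx⟩

/-- For a Tychonoff space `X`, a bornology `𝔅` with compact base on `X`,
and a nontrivial open `𝔅`-cover `𝒰` of `X`, the set
`A = {f ∈ C(X,ℝ) : ∃ U ∈ 𝒰, f ≡ 1 on X ∖ U}` belongs to `Ω_{0̄}` in `C_𝔅(X)`. -/
theorem stmt0 {X : Type u} [TopologicalSpace X] [T35Space X]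
    (𝔅 : Set (Set X)) (hB : IsBornology 𝔅) (hcb : HasCompactBase 𝔅)
    (𝒰 : Set (Set X)) (h𝒰 : 𝒰 ∈ OpenBCovers 𝔅) (hnt : Set.univ ∉ 𝒰) :
    {f : CFn X | ∃ U ∈ 𝒰, ∀ x ∈ Uᶜ, f.1 x = 1} ∈
      @OmegaAt (CFn X) (bornTopology 𝔅 hB) (zeroFn X) := by
  refine ⟨?_, ?_⟩
  · rintro f ⟨U, hU, hf⟩ h0
    apply hnt
    have : U = Set.univ := by
      by_contra hne
      obtain ⟨x, hx⟩ := (Set.ne_univ_iff_exists_notMem U).1 hne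
      have h1 := hf x hx
      rw [Set.mem_singleton_iff.1 h0] at h1
      exact zero_ne_one h1
    exact this ▸ hU
  · rw [@mem_closure_iff]
    intro O hO hzO
    obtain ⟨B, hBm, ε, hε, hball⟩ := hO _ hzO
    obtain ⟨K, hKm, hKc, hBK⟩ := hcb B hBm
    obtain ⟨U, hU, hKU⟩ := h𝒰.2 K hKm
    obtain ⟨f, hfc, h0, h1⟩ := aux_sep hKc (h𝒰.1 U hU) hKU
    refine ⟨⟨f, hfc⟩, hball ?_, U, hU, h1⟩
    intro x hx
    simpa [zeroFn, h0 x (hBK hx)] using hε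
end

section
/- Let X be a Tychonoff topological space and let 𝔅 be a bornology with compact base on X. Player II has a winning strategy in the game G₁(𝒪_𝔅, 𝒪_𝔅) played on X if and only if player II has a winning strategy in the game G₁(Ω_{0̄}, Ω_{0̄}) played on C_𝔅(X). -/
open Set Topology

universe u

theorem mem_closure_zero_iff {X : Type u} [TopologicalSpace X]
    (𝔅 : Set (Set X)) (hB : IsBornology 𝔅) (A : Set (CFn X)) :
    zeroFn X ∈ @closure (CFn X) (bornTopology 𝔅 hB) A ↔
      ∀ B ∈ 𝔅, ∀ ε > (0 : ℝ), ∃ f ∈ A, ∀ x ∈ B, |f.1 x| < ε := by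
  letI := bornTopology 𝔅 hB
  rw [mem_closure_iff]
  constructor
  · intro h B hBm ε hε
    have hopen : IsOpen {g : CFn X | ∃ δ > (0 : ℝ), unifBall g B δ ⊆ unifBall (zeroFn X) B ε} := by
      rintro g ⟨δ, hδ, hg⟩
      refine ⟨B, hBm, δ / 2, half_pos hδ, fun k hk => ⟨δ / 2, half_pos hδ, fun l hl => hg ?_⟩⟩
      intro x hx
      have h1 := hk x hx
      have h2 := hl x hx
      have h3 := abs_sub_le (g.1 x) (k.1 x) (l.1 x)
      linarith
    obtain ⟨f, ⟨δ, hδ, hf⟩, hfA⟩ := h _ hopen ⟨ε, hε, subset_rfl⟩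
    refine ⟨f, hfA, fun x hx => ?_⟩
    have h1 : f ∈ unifBall (zeroFn X) B ε := hf (fun y _ => by simpa using hδ)
    have h2 := h1 x hx
    simpa [zeroFn] using h2
  · intro h O hO h0
    obtain ⟨B, hBm, ε, hε, hsub⟩ := hO _ h0
    obtain ⟨f, hfA, hf⟩ := h B hBm ε hε
    exact ⟨f, hsub (fun x hx => by simpa [zeroFn] using hf x hx), hfA⟩

theorem exists_sep {X : Type u} [TopologicalSpace X] [T35Space X] {K U : Set X}
    (hK : IsCompact K) (hU : IsOpen U) (hKU : K ⊆ U) :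
    ∃ f : X → ℝ, Continuous f ∧ (∀ x ∈ K, f x = 0) ∧ (∀ x ∉ U, f x = 1) := by
  have hind : IsInducing (stoneCechUnit : X → StoneCech X) := isInducing_stoneCechUnit
  obtain ⟨V, hV, rfl⟩ := hind.isOpen_iff.1 hU
  have hc : IsClosed (stoneCechUnit '' K) := (hK.image hind.continuous).isClosed
  obtain ⟨f, h0, h1, -⟩ := exists_continuous_zero_one_of_isClosed hc hV.isClosed_compl
    (by
      rw [Set.disjoint_compl_right_iff_subset]
      rintro _ ⟨x, hx, rfl⟩
      exact hKU hx)
  exact ⟨fun x => f (stoneCechUnit x), f.continuous.comp hind.continuous,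
    fun x hx => h0 ⟨x, hx, rfl⟩, fun x hx => h1 hx⟩

theorem covers_to_functions {X : Type u} [TopologicalSpace X]
    (𝔅 : Set (Set X)) (hB : IsBornology 𝔅)
    (H : G1WinII (OpenBCovers 𝔅) (OpenBCovers 𝔅)) :
    G1WinII (@OmegaAt (CFn X) (bornTopology 𝔅 hB) (zeroFn X))
        (@OmegaAt (CFn X) (bornTopology 𝔅 hB) (zeroFn X)) := by
  obtain ⟨σ, hσ1, hσ2⟩ := H
  haveI : Nonempty (CFn X) := ⟨zeroFn X⟩
  let pre : ℕ → CFn X → Set X := fun k f => {x | |f.1 x| < 1 / ((k : ℝ) + 1)}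
  have hcov : ∀ k, ∀ A ∈ @OmegaAt (CFn X) (bornTopology 𝔅 hB) (zeroFn X),
      pre k '' A ∈ OpenBCovers 𝔅 := by
    intro k A hA
    refine ⟨?_, ?_⟩
    · rintro _ ⟨f, -, rfl⟩
      exact isOpen_lt f.2.abs continuous_const
    · intro B hBm
      obtain ⟨f, hfA, hf⟩ := (mem_closure_zero_iff 𝔅 hB A).1 hA.2 B hBm
        (1 / ((k : ℝ) + 1)) (by positivity)
      exact ⟨_, ⟨f, hfA, rfl⟩, hf⟩
  let τ : ℕ → ℕ → (n : ℕ) → (Fin (n + 1) → Set (CFn X)) → CFn X := fun k j n h =>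
    Classical.epsilon (fun f => f ∈ h (Fin.last n) ∧
      pre k f = σ j (fun i => pre k '' h ⟨min (Nat.pair k i.1) n, by omega⟩))
  have hτ : ∀ k j n (h : Fin (n + 1) → Set (CFn X)), n = Nat.pair k j →
      (∀ i, h i ∈ @OmegaAt (CFn X) (bornTopology 𝔅 hB) (zeroFn X)) →
      τ k j n h ∈ h (Fin.last n) ∧
      pre k (τ k j n h) = σ j (fun i => pre k '' h ⟨min (Nat.pair k i.1) n, by omega⟩) := by
    intro k j n h hn hh
    have h1 := hσ1 j (fun i => pre k '' h ⟨min (Nat.pair k i.1) n, by omega⟩)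
      (fun i => hcov k _ (hh _))
    have h2 : (⟨min (Nat.pair k (Fin.last j).1) n, by omega⟩ : Fin (n + 1)) = Fin.last n := by
      ext; simp [hn]
    simp only [h2] at h1
    obtain ⟨f, hf, hfe⟩ := h1
    exact Classical.epsilon_spec (p := fun f => f ∈ h (Fin.last n) ∧
      pre k f = σ j (fun i => pre k '' h ⟨min (Nat.pair k i.1) n, by omega⟩)) ⟨f, hf, hfe⟩
  have hmem : ∀ n (h : Fin (n + 1) → Set (CFn X)),
      (∀ i, h i ∈ @OmegaAt (CFn X) (bornTopology 𝔅 hB) (zeroFn X)) →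
      τ n.unpair.1 n.unpair.2 n h ∈ h (Fin.last n) :=
    fun n h hh => (hτ _ _ n h (Nat.pair_unpair n).symm hh).1
  refine ⟨fun n h => τ n.unpair.1 n.unpair.2 n h, hmem, ?_⟩
  intro A hA
  refine ⟨?_, ?_⟩
  · rintro _ ⟨n, rfl⟩
    exact (hA n).1 (hmem n (fun i => A i.1) (fun i => hA _))
  · rw [mem_closure_zero_iff]
    intro B hBm ε hε
    obtain ⟨k, hk⟩ := exists_nat_one_div_lt hε
    obtain ⟨_, ⟨j, rfl⟩, hj⟩ := (hσ2 (fun j => pre k '' A (Nat.pair k j))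
      (fun j => hcov k _ (hA _))).2 B hBm
    refine ⟨_, ⟨Nat.pair k j, rfl⟩, ?_⟩
    have h1 := (hτ k j (Nat.pair k j) (fun i => A i.1) rfl (fun i => hA _)).2
    have h3 : ∀ i : Fin (j + 1), min (Nat.pair k i.1) (Nat.pair k j) = Nat.pair k i.1 := by
      intro i
      apply min_eq_left
      rcases Nat.lt_or_ge i.1 j with h | h
      · exact (Nat.pair_lt_pair_right k h).le
      · rw [show i.1 = j by omega]
    simp only [h3] at h1
    intro x hx
    have h4 := hj hx
    simp only [← h1] at h4
    simp only [Nat.unpair_pair]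
    exact lt_trans h4 hk

theorem functions_to_covers {X : Type u} [TopologicalSpace X] [T35Space X]
    (𝔅 : Set (Set X)) (hB : IsBornology 𝔅) (hcb : HasCompactBase 𝔅)
    (H : G1WinII (@OmegaAt (CFn X) (bornTopology 𝔅 hB) (zeroFn X))
        (@OmegaAt (CFn X) (bornTopology 𝔅 hB) (zeroFn X))) :
    G1WinII (OpenBCovers 𝔅) (OpenBCovers 𝔅) := by
  rcases isEmpty_or_nonempty X with hX | ⟨⟨x₀⟩⟩
  · refine ⟨fun _ _ => ∅, ?_, ?_⟩
    · intro n h hh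
      obtain ⟨G, hG, -⟩ := (hh (Fin.last n)).2 ∅ hB.empty_mem
      rwa [Set.eq_empty_of_isEmpty G] at hG
    · intro A hA
      refine ⟨?_, fun B _ => ⟨∅, ⟨0, rfl⟩, ?_⟩⟩
      · rintro _ ⟨n, rfl⟩
        exact isOpen_empty
      · rw [Set.eq_empty_of_isEmpty B]
  obtain ⟨σ, hσ1, hσ2⟩ := H
  let F : Set (Set X) → Set (CFn X) := fun 𝒰 =>
    {f | f ≠ zeroFn X ∧ ∃ U ∈ 𝒰, ∀ x ∉ U, f.1 x = 1}
  have hF : ∀ 𝒰 ∈ OpenBCovers 𝔅,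
      F 𝒰 ∈ @OmegaAt (CFn X) (bornTopology 𝔅 hB) (zeroFn X) := by
    intro 𝒰 h𝒰
    refine ⟨fun f hf => hf.1, ?_⟩
    rw [mem_closure_zero_iff]
    intro B hBm ε hε
    obtain ⟨K, hKm, hK, hBK⟩ := hcb B hBm
    obtain ⟨U, hU, hKU⟩ := h𝒰.2 K hKm
    obtain ⟨f, hfc, hf0, hf1⟩ := exists_sep hK (h𝒰.1 U hU) hKU
    have hd : 0 < min (ε / 2) 1 := lt_min (half_pos hε) one_pos
    refine ⟨⟨fun x => max (f x) (min (ε / 2) 1), hfc.max continuous_const⟩, ⟨?_, U, hU, ?_⟩, ?_⟩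
    · intro h
      have h1 := congrFun (congrArg Subtype.val h) x₀
      have h2 : max (f x₀) (min (ε / 2) 1) = 0 := h1
      have h3 := le_max_right (f x₀) (min (ε / 2) 1)
      linarith
    · intro x hx
      simp [hf1 x hx]
    · intro x hx
      simp only [hf0 x (hBK hx)]
      rw [max_eq_right hd.le, abs_of_pos hd]
      exact lt_of_le_of_lt (min_le_left _ _) (half_lt_self hε)
  let τ : (n : ℕ) → (Fin (n + 1) → Set (Set X)) → Set X := fun n h =>
    Classical.epsilon (fun U => U ∈ h (Fin.last n) ∧ ∀ x ∉ U, (σ n (fun i => F (h i))).1 x = 1)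
  have hτ : ∀ n (h : Fin (n + 1) → Set (Set X)), (∀ i, h i ∈ OpenBCovers 𝔅) →
      τ n h ∈ h (Fin.last n) ∧ ∀ x ∉ τ n h, (σ n (fun i => F (h i))).1 x = 1 := by
    intro n h hh
    obtain ⟨-, U, hU, hU1⟩ := hσ1 n (fun i => F (h i)) (fun i => hF _ (hh i))
    exact Classical.epsilon_spec (p := fun U => U ∈ h (Fin.last n) ∧
      ∀ x ∉ U, (σ n (fun i => F (h i))).1 x = 1) ⟨U, hU, hU1⟩
  refine ⟨τ, fun n h hh => (hτ n h hh).1, ?_⟩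
  intro A hA
  refine ⟨?_, ?_⟩
  · rintro _ ⟨n, rfl⟩
    exact (hA n).1 _ (hτ n (fun i => A i.1) (fun i => hA _)).1
  · intro B hBm
    obtain ⟨_, ⟨n, rfl⟩, hn⟩ := (mem_closure_zero_iff 𝔅 hB _).1
      (hσ2 (fun n => F (A n)) (fun n => hF _ (hA n))).2 B hBm 1 one_pos
    refine ⟨_, ⟨n, rfl⟩, fun x hx => ?_⟩
    by_contra hxn
    have h1 := (hτ n (fun i => A i.1) (fun i => hA _)).2 x hxn
    have h2 := hn x hx
    simp only [h1] at h2
    simp at h2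

/-- Player II has a winning strategy in `G₁(𝒪_𝔅, 𝒪_𝔅)` on `X` iff
player II has a winning strategy in `G₁(Ω_{0̄}, Ω_{0̄})` on `C_𝔅(X)`. -/
theorem stmt2 {X : Type u} [TopologicalSpace X] [T35Space X]
    (𝔅 : Set (Set X)) (hB : IsBornology 𝔅) (hcb : HasCompactBase 𝔅) :
    G1WinII (OpenBCovers 𝔅) (OpenBCovers 𝔅) ↔
      G1WinII (@OmegaAt (CFn X) (bornTopology 𝔅 hB) (zeroFn X))
        (@OmegaAt (CFn X) (bornTopology 𝔅 hB) (zeroFn X)) := by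
  exact ⟨covers_to_functions 𝔅 hB, functions_to_covers 𝔅 hB hcb⟩
end

section
/- Let X be a Tychonoff topological space, let 𝔅 be a bornology with compact base on X, and let α be a countable ordinal with α ≥ ω. Player II has a winning strategy in the game G₁^α(𝒪_𝔅, 𝒪_𝔅) of length α played on X if and only if player II has a winning strategy in the game G₁^α(Ω_{0̄}, Ω_{0̄}) of length α played on C_𝔅(X). -/
open Set Topology

universe u

lemma transfer_strategy {S T : Type*} [Nonempty S] {α : Ordinal.{0}} {𝒜 𝒞 : Set (Set T)}
    {𝒜' 𝒞' : Set (Set S)}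
    (Φ : Ordinal.{0} → Set S → Set T) (R : Ordinal.{0} → T → S → Prop)
    (hΦ : ∀ γ < α, ∀ A ∈ 𝒜', Φ γ A ∈ 𝒜)
    (hR : ∀ γ < α, ∀ A ∈ 𝒜', ∀ t ∈ Φ γ A, ∃ s ∈ A, R γ t s)
    (hC : ∀ (A : {γ : Ordinal.{0} // γ < α} → Set S) (t : {γ : Ordinal.{0} // γ < α} → T)
      (s : {γ : Ordinal.{0} // γ < α} → S),
      (∀ γ, A γ ∈ 𝒜') → (∀ γ, s γ ∈ A γ) → (∀ γ, t γ ∈ Φ γ.1 (A γ)) →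
      (∀ γ, R γ.1 (t γ) (s γ)) →
      Set.range t ∈ 𝒞 → Set.range s ∈ 𝒞') :
    G1WinIIOrd α 𝒜 𝒞 → G1WinIIOrd α 𝒜' 𝒞' := by
  classical
  rintro ⟨σ, h1, h2⟩
  have hex : ∀ (γ : Ordinal.{0}) (A : Set S) (t : T), ∃ s : S,
      (γ < α → A ∈ 𝒜' → t ∈ Φ γ A → s ∈ A ∧ R γ t s) := by
    intro γ A t
    by_cases h : γ < α ∧ A ∈ 𝒜' ∧ t ∈ Φ γ A
    · obtain ⟨s, hs⟩ := hR γ h.1 A h.2.1 t h.2.2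
      exact ⟨s, fun _ _ _ => hs⟩
    · exact ⟨Classical.arbitrary S, fun a b c => (h ⟨a, b, c⟩).elim⟩
  choose Ψ hΨ using hex
  have key : ∀ (γ : {γ : Ordinal.{0} // γ < α}) (h : {δ : Ordinal.{0} // δ ≤ γ.1} → Set S),
      (∀ δ, h δ ∈ 𝒜') →
      σ γ (fun δ => Φ δ.1 (h δ)) ∈ Φ γ.1 (h ⟨γ.1, le_rfl⟩) := fun γ h hh =>
    h1 γ (fun δ => Φ δ.1 (h δ)) (fun δ => hΦ _ (lt_of_le_of_lt δ.2 γ.2) _ (hh δ))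
  refine ⟨fun γ h => Ψ γ.1 (h ⟨γ.1, le_rfl⟩) (σ γ (fun δ => Φ δ.1 (h δ))), ?_, ?_⟩
  · intro γ h hh
    exact (hΨ γ.1 _ _ γ.2 (hh _) (key γ h hh)).1
  · intro A hA
    have kA := fun γ : {γ : Ordinal.{0} // γ < α} =>
      key γ (fun δ => A ⟨δ.1, lt_of_le_of_lt δ.2 γ.2⟩) (fun δ => hA _)
    refine hC A (fun γ => σ γ (fun δ => Φ δ.1 (A ⟨δ.1, lt_of_le_of_lt δ.2 γ.2⟩))) _ hA
      (fun γ => (hΨ γ.1 _ _ γ.2 (hA _) (kA γ)).1) kA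
      (fun γ => (hΨ γ.1 _ _ γ.2 (hA _) (kA γ)).2) ?_
    exact h2 (fun γ => Φ γ.1 (A γ)) (fun γ => hΦ _ γ.2 _ (hA γ))

lemma mem_closure_zero {X : Type u} [TopologicalSpace X] (𝔅 : Set (Set X))
    (hB : IsBornology 𝔅) (A : Set (CFn X)) :
    zeroFn X ∈ @closure _ (bornTopology 𝔅 hB) A ↔
      ∀ B ∈ 𝔅, ∀ ε > (0 : ℝ), ∃ g ∈ A, ∀ x ∈ B, |g.1 x| < ε := by
  letI := bornTopology 𝔅 hB
  rw [mem_closure_iff]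
  constructor
  · intro h B hBB ε hε
    have ho : IsOpen {g : CFn X | ∃ δ > (0 : ℝ), ∀ x ∈ B, |g.1 x| < ε - δ} := by
      rintro g ⟨δ, hδ, hg⟩
      refine ⟨B, hBB, δ / 2, by positivity, fun k hk => ⟨δ / 2, by positivity, fun x hx => ?_⟩⟩
      have h1 := hk x hx
      have h2 := hg x hx
      rw [abs_lt] at *
      constructor <;> linarith
    obtain ⟨g, ⟨δ, hδ, hg⟩, hgA⟩ := h _ ho
      ⟨ε / 2, by positivity, fun x _ => by simp only [zeroFn, abs_zero]; linarith⟩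
    exact ⟨g, hgA, fun x hx => by linarith [hg x hx]⟩
  · intro h O hO h0
    obtain ⟨B, hBB, ε, hε, hsub⟩ := hO _ h0
    obtain ⟨g, hgA, hg⟩ := h B hBB ε hε
    exact ⟨g, hsub fun x hx => by simpa [zeroFn] using hg x hx, hgA⟩

lemma sep_compact {X : Type u} [TopologicalSpace X] [T35Space X] {K U : Set X}
    (hK : IsCompact K) (hU : IsOpen U) (h : K ⊆ U) :
    ∃ f : X → ℝ, Continuous f ∧ (∀ x ∈ K, f x = 0) ∧ ∀ x ∉ U, f x = 1 := by
  obtain ⟨W, hW, rfl⟩ := (isInducing_stoneCechUnit (X := X)).isOpen_iff.1 hU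
  obtain ⟨f, h0, h1, -⟩ := exists_continuous_zero_one_of_isClosed
    (hK.image continuous_stoneCechUnit).isClosed hW.isClosed_compl
    (by
      rw [Set.disjoint_left]
      rintro _ ⟨x, hx, rfl⟩ hn
      exact hn (h hx))
  exact ⟨f ∘ stoneCechUnit, f.continuous.comp continuous_stoneCechUnit,
    fun x hx => h0 ⟨x, hx, rfl⟩, fun x hx => h1 hx⟩

lemma exists_eps (α : Ordinal.{0}) (hαc : α.card ≤ Cardinal.aleph0) :
    ∃ ε : Ordinal.{0} → ℝ, (∀ γ, 0 < ε γ) ∧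
      ∀ r > 0, {γ : Ordinal.{0} | γ < α ∧ r ≤ ε γ}.Finite := by
  have hc : (Set.Iio α).Countable := by
    rw [← Cardinal.le_aleph0_iff_set_countable, Cardinal.mk_Iio_ordinal]
    exact Cardinal.lift_le_aleph0.2 hαc
  obtain ⟨n, hn⟩ := Set.countable_iff_exists_injOn.1 hc
  refine ⟨fun γ => 1 / ((n γ : ℝ) + 1), fun γ => by positivity, fun r hr => ?_⟩
  obtain ⟨N, hN⟩ := exists_nat_one_div_lt hr
  refine Set.Finite.of_finite_image (f := n) ((Set.finite_Iio N).subset ?_)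
    (hn.mono fun γ hγ => hγ.1)
  rintro _ ⟨γ, ⟨_, hγ⟩, rfl⟩
  by_contra hlt
  simp only [Set.mem_Iio, not_lt] at hlt
  have : 1 / ((n γ : ℝ) + 1) ≤ 1 / ((N : ℝ) + 1) := by
    have : (N : ℝ) ≤ n γ := by exact_mod_cast hlt
    gcongr
  linarith

instance instNonemptyCFn (X : Type u) [TopologicalSpace X] : Nonempty (CFn X) := ⟨zeroFn X⟩

lemma finite_mem {X : Type*} {𝔅 : Set (Set X)} (hB : IsBornology 𝔅) {F : Set X}
    (hF : F.Finite) : F ∈ 𝔅 := by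
  induction F, hF using Set.Finite.induction_on with
  | empty => exact hB.empty_mem
  | @insert a s _ _ ih =>
    have : a ∈ ⋃₀ 𝔅 := hB.covers ▸ Set.mem_univ a
    obtain ⟨B, hBB, ha⟩ := this
    exact hB.union_mem (hB.subset_mem hBB (Set.singleton_subset_iff.2 ha)) ih

lemma forward_dir {X : Type u} [TopologicalSpace X] [T35Space X]
    (𝔅 : Set (Set X)) (hB : IsBornology 𝔅) (hcb : HasCompactBase 𝔅)
    (α : Ordinal.{0}) (hα : Ordinal.omega0 ≤ α) (hαc : α.card ≤ Cardinal.aleph0) :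
    G1WinIIOrd α (OpenBCovers 𝔅) (OpenBCovers 𝔅) →
      G1WinIIOrd α (@OmegaAt (CFn X) (bornTopology 𝔅 hB) (zeroFn X))
        (@OmegaAt (CFn X) (bornTopology 𝔅 hB) (zeroFn X)) := by
  classical
  obtain ⟨ε, hε0, hεf⟩ := exists_eps α hαc
  by_cases hX : Set.univ ∈ 𝔅
  · intro _
    have hex : ∀ (γ : Ordinal.{0}) (A : Set (CFn X)), ∃ f : CFn X,
        A ∈ @OmegaAt (CFn X) (bornTopology 𝔅 hB) (zeroFn X) → f ∈ A ∧ ∀ x, |f.1 x| < ε γ := by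
      intro γ A
      by_cases hA : A ∈ @OmegaAt (CFn X) (bornTopology 𝔅 hB) (zeroFn X)
      · obtain ⟨g, hg, hg'⟩ := (mem_closure_zero 𝔅 hB A).1 hA.2 _ hX (ε γ) (hε0 γ)
        exact ⟨g, fun _ => ⟨hg, fun x => hg' x trivial⟩⟩
      · exact ⟨zeroFn X, fun h => (hA h).elim⟩
    choose Ψ hΨ using hex
    refine ⟨fun γ h => Ψ γ.1 (h ⟨γ.1, le_rfl⟩), fun γ h hh => (hΨ _ _ (hh _)).1, ?_⟩
    intro A hA
    refine ⟨?_, (mem_closure_zero 𝔅 hB _).2 ?_⟩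
    · rintro _ ⟨γ, rfl⟩
      exact (hA γ).1 (hΨ _ _ (hA γ)).1
    · intro B _ r hr
      have hinf : (Set.Iio α).Infinite := by
        rw [← Set.infinite_coe_iff, Cardinal.infinite_iff, Cardinal.mk_Iio_ordinal]
        exact Cardinal.aleph0_le_lift.2 (Ordinal.aleph0_le_card.2 hα)
      obtain ⟨γ, hγ, hγ'⟩ := hinf.exists_notMem_finite (hεf r hr)
      refine ⟨_, ⟨⟨γ, hγ⟩, rfl⟩, fun x _ => ?_⟩
      have h1 : ε γ < r := by
        by_contra hc
        exact hγ' ⟨hγ, not_lt.1 hc⟩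
      exact ((hΨ γ _ (hA ⟨γ, hγ⟩)).2 x).trans h1
  · refine transfer_strategy
      (fun γ A => {V | IsOpen V ∧ V ≠ Set.univ ∧ ∃ f ∈ A, ∀ x ∈ V, |f.1 x| < ε γ})
      (fun γ V f => ∀ x ∈ V, |f.1 x| < ε γ) ?_ ?_ ?_
    · intro γ _ A hA
      refine ⟨fun V hV => hV.1, fun B hBB => ?_⟩
      obtain ⟨g, hg, hg'⟩ := (mem_closure_zero 𝔅 hB A).1 hA.2 B hBB (ε γ) (hε0 γ)
      obtain ⟨x, hx⟩ : ∃ x, x ∉ B := by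
        by_contra hc
        push Not at hc
        exact hX (Set.eq_univ_of_forall hc ▸ hBB)
      refine ⟨{y | |g.1 y| < ε γ} ∩ {x}ᶜ, ⟨?_, ?_, g, hg, fun y hy => hy.1⟩, ?_⟩
      · exact (isOpen_lt g.2.abs continuous_const).inter isOpen_compl_singleton
      · intro h
        have : x ∈ {y | |g.1 y| < ε γ} ∩ {x}ᶜ := h ▸ Set.mem_univ x
        exact this.2 rfl
      · intro y hy
        exact ⟨hg' y hy, fun h => hx (h ▸ hy)⟩
    · intro γ _ A _ V hV
      exact hV.2.2
    · intro A t s hA hs ht hR hC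
      refine ⟨?_, (mem_closure_zero 𝔅 hB _).2 ?_⟩
      · rintro _ ⟨γ, rfl⟩
        exact (hA γ).1 (hs γ)
      · intro B hBB r hr
        have hp : ∀ γ, ∃ x, x ∉ t γ := fun γ => (Set.ne_univ_iff_exists_notMem _).1 (ht γ).2.1
        choose p hp using hp
        have hfin : {γ : {γ : Ordinal.{0} // γ < α} | r ≤ ε γ.1}.Finite := by
          refine Set.Finite.of_finite_image (f := Subtype.val) ((hεf r hr).subset ?_)
            Subtype.val_injective.injOn
          rintro _ ⟨γ, hγ, rfl⟩
          exact ⟨γ.2, hγ⟩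
        obtain ⟨_, ⟨γ, rfl⟩, hγ⟩ := hC.2 _ (hB.union_mem hBB (finite_mem hB (hfin.image p)))
        refine ⟨s γ, ⟨γ, rfl⟩, fun x hx => ?_⟩
        have h1 : ε γ.1 < r := by
          by_contra hc
          exact hp γ (hγ (Or.inr ⟨γ, not_lt.1 hc, rfl⟩))
        exact (hR γ x (hγ (Or.inl hx))).trans h1

lemma backward_dir {X : Type u} [TopologicalSpace X] [T35Space X]
    (𝔅 : Set (Set X)) (hB : IsBornology 𝔅) (hcb : HasCompactBase 𝔅)
    (α : Ordinal.{0}) (hα : Ordinal.omega0 ≤ α) :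
      G1WinIIOrd α (@OmegaAt (CFn X) (bornTopology 𝔅 hB) (zeroFn X))
        (@OmegaAt (CFn X) (bornTopology 𝔅 hB) (zeroFn X)) →
    G1WinIIOrd α (OpenBCovers 𝔅) (OpenBCovers 𝔅) := by
  classical
  rcases isEmpty_or_nonempty X with hE | hN
  · intro _
    have hex : ∀ (A : Set (Set X)), ∃ U, A ∈ OpenBCovers 𝔅 → U ∈ A := by
      intro A
      by_cases hA : A ∈ OpenBCovers 𝔅
      · obtain ⟨U, hU, _⟩ := hA.2 ∅ hB.empty_mem
        exact ⟨U, fun _ => hU⟩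
      · exact ⟨∅, fun h => (hA h).elim⟩
    choose Ψ hΨ using hex
    refine ⟨fun γ h => Ψ (h ⟨γ.1, le_rfl⟩), fun γ h hh => hΨ _ (hh _), fun A hA => ⟨?_, ?_⟩⟩
    · rintro _ ⟨γ, rfl⟩
      exact (hA γ).1 _ (hΨ _ (hA γ))
    · intro B _
      exact ⟨_, ⟨⟨0, lt_of_lt_of_le Ordinal.omega0_pos hα⟩, rfl⟩, fun x => (hE.false x).elim⟩
  · refine transfer_strategy
      (fun _ A => {f | f ≠ zeroFn X ∧ ∃ U ∈ A, ∀ x ∉ U, f.1 x = 1})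
      (fun _ f U => ∀ x ∉ U, f.1 x = 1) ?_ ?_ ?_
    · intro γ _ A hA
      refine ⟨fun f hf => hf.1, (mem_closure_zero 𝔅 hB _).2 fun B hBB r hr => ?_⟩
      obtain ⟨K, hKB, hK, hBK⟩ := hcb B hBB
      obtain ⟨U, hU, hKU⟩ := hA.2 K hKB
      by_cases hUX : U = Set.univ
      · subst hUX
        refine ⟨⟨fun _ => r / 2, continuous_const⟩, ⟨?_, _, hU, fun x hx => (hx trivial).elim⟩,
          fun x _ => ?_⟩
        · intro h
          have := congrFun (congrArg Subtype.val h) (Classical.arbitrary X)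
          simp only [zeroFn] at this
          linarith
        · show |r / 2| < r
          rw [abs_of_pos (by positivity)]
          linarith
      · obtain ⟨f, hf, h0, h1⟩ := sep_compact hK (hA.1 U hU) hKU
        obtain ⟨y, hy⟩ := (Set.ne_univ_iff_exists_notMem _).1 hUX
        refine ⟨⟨f, hf⟩, ⟨?_, U, hU, h1⟩, fun x hx => ?_⟩
        · intro h
          have := congrFun (congrArg Subtype.val h) y
          simp only [zeroFn] at this
          rw [h1 y hy] at this
          exact one_ne_zero this
        · show |f x| < r
          rw [h0 x (hBK hx)]
          simpa using hr
    · intro γ _ A _ f hf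
      exact hf.2
    · intro A t s hA hs ht hR hC
      refine ⟨?_, fun B hBB => ?_⟩
      · rintro _ ⟨γ, rfl⟩
        exact (hA γ).1 _ (hs γ)
      · obtain ⟨_, ⟨γ, rfl⟩, hγ⟩ := (mem_closure_zero 𝔅 hB _).1 hC.2 B hBB 1 one_pos
        refine ⟨s γ, ⟨γ, rfl⟩, fun x hx => ?_⟩
        by_contra hn
        have := hγ x hx
        rw [hR γ x hn] at this
        simp at this

/-- For a countable ordinal `α ≥ ω`, player II has a winning strategy in
`G₁^α(𝒪_𝔅, 𝒪_𝔅)` on `X` iff player II has a winning strategy in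
`G₁^α(Ω_{0̄}, Ω_{0̄})` on `C_𝔅(X)`. -/
theorem stmt3 {X : Type u} [TopologicalSpace X] [T35Space X]
    (𝔅 : Set (Set X)) (hB : IsBornology 𝔅) (hcb : HasCompactBase 𝔅)
    (α : Ordinal.{0}) (hα : Ordinal.omega0 ≤ α) (hαc : α.card ≤ Cardinal.aleph0) :
    G1WinIIOrd α (OpenBCovers 𝔅) (OpenBCovers 𝔅) ↔
      G1WinIIOrd α (@OmegaAt (CFn X) (bornTopology 𝔅 hB) (zeroFn X))
        (@OmegaAt (CFn X) (bornTopology 𝔅 hB) (zeroFn X)) := by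
  exact ⟨forward_dir 𝔅 hB hcb α hα hαc, backward_dir 𝔅 hB hcb α hα⟩
end

section
/- Let X be a Tychonoff topological space, let 𝔅 be a bornology with compact base on X, and let κ be an infinite cardinal. If there exists a 𝔅-cover 𝒢 of X consisting of G_κ-sets which admits no 𝔅-subcover of cardinality at most κ, then there exists a family of collections of subsets of C_𝔅(X) that is κ-singular at the zero function 0̄. -/
open Set Topology

universe u

lemma sep_aux {X : Type u} [TopologicalSpace X] [T35Space X] {K O : Set X}
    (hK : IsCompact K) (hO : IsOpen O) (hKO : K ⊆ O) :
    ∃ f : CFn X, (∀ x, 0 ≤ f.1 x) ∧ (∀ x ∈ K, f.1 x = 0) ∧ ∀ x, x ∉ O → f.1 x = 1 := by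
  refine hK.induction_on
    (p := fun K => ∃ f : CFn X, (∀ x, 0 ≤ f.1 x) ∧ (∀ x ∈ K, f.1 x = 0) ∧
      ∀ x, x ∉ O → f.1 x = 1) ?_ ?_ ?_ ?_
  · exact ⟨⟨fun _ => 1, continuous_const⟩, fun _ => zero_le_one, by simp, fun _ _ => rfl⟩
  · rintro s t hst ⟨f, h0, h1, h2⟩
    exact ⟨f, h0, fun x hx => h1 x (hst hx), h2⟩
  · rintro s t ⟨f, f0, f1, f2⟩ ⟨g, g0, g1, g2⟩
    refine ⟨⟨fun x => f.1 x * g.1 x, f.2.mul g.2⟩, fun x => mul_nonneg (f0 x) (g0 x), ?_, ?_⟩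
    · rintro x (hx | hx)
      · simp [f1 x hx]
      · simp [g1 x hx]
    · intro x hx
      simp [f2 x hx, g2 x hx]
  · intro x hx
    obtain ⟨f, cf, fx, fO⟩ :=
      CompletelyRegularSpace.completely_regular_isOpen x O hO (hKO hx)
    have cf' : Continuous fun y => (f y : ℝ) := continuous_subtype_val.comp cf
    refine ⟨{y | (f y : ℝ) < 1 / 2}, mem_nhdsWithin_of_mem_nhds
      ((isOpen_lt cf' continuous_const).mem_nhds (by simp [fx])),
      ⟨fun y => max 0 (2 * (f y : ℝ) - 1), by fun_prop⟩, fun y => le_max_left _ _, ?_, ?_⟩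
    · intro y hy
      have hy' : (f y : ℝ) < 1 / 2 := hy
      exact max_eq_left (by linarith)
    · intro y hy
      have h1 : f y = 1 := fO hy
      simp only [h1]
      norm_num

/-- Finite sum of functions. -/
noncomputable def sumFn {X : Type u} [TopologicalSpace X] {ι : Type u} (f : ι → CFn X)
    (F : Finset ι) : CFn X :=
  ⟨fun x => ∑ i ∈ F, (f i).1 x, continuous_finsetSum _ fun i _ => (f i).2⟩

/-- The set of finite sums over finsets containing `F`. -/
def tailSet {X : Type u} [TopologicalSpace X] {ι : Type u} (f : ι → CFn X)
    (F : Finset ι) : Set (CFn X) :=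
  {g | ∃ F', F ⊆ F' ∧ g = sumFn f F'}

lemma tail_card {X : Type u} [TopologicalSpace X] {ι : Type u} (f : ι → CFn X)
    (F : Finset ι) {κ : Cardinal.{u}} (hκ : Cardinal.aleph0 ≤ κ) (hι : Cardinal.mk ι ≤ κ) :
    Cardinal.mk (tailSet f F) ≤ κ := by
  classical
  have h1 : tailSet f F ⊆ range (fun l : List ι => sumFn f l.toFinset) := by
    rintro g ⟨F', -, rfl⟩
    exact ⟨F'.toList, by simp⟩
  calc Cardinal.mk (tailSet f F)
      ≤ Cardinal.mk (range (fun l : List ι => sumFn f l.toFinset)) := Cardinal.mk_le_mk_of_subset h1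
    _ ≤ Cardinal.mk (List ι) := Cardinal.mk_range_le
    _ ≤ max Cardinal.aleph0 (Cardinal.mk ι) := Cardinal.mk_list_le_max _
    _ ≤ κ := max_le hκ hι

lemma tail_fip {X : Type u} [TopologicalSpace X] {ι : Type u} (f : ι → CFn X)
    (F : Finset (Set (CFn X))) (hF : (F : Set (Set (CFn X))) ⊆ range (tailSet f)) :
    (⋂₀ (F : Set (Set (CFn X)))).Nonempty := by
  classical
  have h : ∀ A : Set (CFn X), ∃ E : Finset ι, A ∈ F → tailSet f E = A := by
    intro A
    by_cases hA : A ∈ F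
    · obtain ⟨E, hE⟩ := hF hA
      exact ⟨E, fun _ => hE⟩
    · exact ⟨∅, fun h => absurd h hA⟩
  choose E hE using h
  refine ⟨sumFn f (F.biUnion E), fun A hA => ?_⟩
  rw [← hE A hA]
  exact ⟨_, Finset.subset_biUnion_of_mem E hA, rfl⟩

/-- If there is a `𝔅`-cover of `X` by `G_κ`-sets with no `𝔅`-subcover of
cardinality at most `κ`, then there is a family of collections of subsets of `C_𝔅(X)`
that is `κ`-singular at `0̄`. -/
theorem stmt6 {X : Type u} [TopologicalSpace X] [T35Space X]
    (𝔅 : Set (Set X)) (hB : IsBornology 𝔅) (hcb : HasCompactBase 𝔅)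
    (κ : Cardinal.{u}) (hκ : Cardinal.aleph0 ≤ κ)
    (h : ∃ 𝒢 : Set (Set X), (∀ G ∈ 𝒢, IsGKappaSet κ G) ∧ IsBCover 𝔅 𝒢 ∧
      ¬∃ 𝒢' ⊆ 𝒢, Cardinal.mk 𝒢' ≤ κ ∧ IsBCover 𝔅 𝒢') :
    ∃ ℙ : Set (Set (Set (CFn X))),
      @KappaSingularAt (CFn X) (bornTopology 𝔅 hB) κ ℙ (zeroFn X) := by
  classical
  obtain ⟨𝒢, hG, hcov, hno⟩ := h
  have key : ∀ K : {K : Set X // K ∈ 𝔅 ∧ IsCompact K}, ∃ G ∈ 𝒢, ∃ 𝒪 : Set (Set X),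
      ∃ f : 𝒪 → CFn X, K.1 ⊆ G ∧ G = ⋂₀ 𝒪 ∧ Cardinal.mk 𝒪 ≤ κ ∧
        ∀ O : 𝒪, (∀ x, 0 ≤ (f O).1 x) ∧ (∀ x ∈ K.1, (f O).1 x = 0) ∧
          ∀ x, x ∉ O.1 → (f O).1 x = 1 := by
    rintro ⟨K, hK, hKc⟩
    obtain ⟨G, hGm, hKG⟩ := hcov K hK
    obtain ⟨𝒪, hO, hcard, hGeq⟩ := hG G hGm
    have hs : ∀ O : 𝒪, K ⊆ O.1 := fun O => by
      rw [hGeq] at hKG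
      exact hKG.trans (sInter_subset_of_mem O.2)
    choose f hf using fun O : 𝒪 => sep_aux hKc (hO O.1 O.2) (hs O)
    exact ⟨G, hGm, 𝒪, f, hKG, hGeq, hcard, hf⟩
  choose G hGm 𝒪 f hKG hGeq hcard hf using key
  refine ⟨range fun K => range (tailSet (f K)), ?_, ?_, ?_, ?_⟩
  · rintro _ ⟨K, rfl⟩ _ ⟨F, rfl⟩
    exact tail_card _ _ hκ (hcard K)
  · rintro _ ⟨K, rfl⟩ F hF
    exact tail_fip _ F hF
  · intro O hO h0
    obtain ⟨B, hBm, ε, hε, hsub⟩ := hO _ h0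
    obtain ⟨K, hK, hKc, hBK⟩ := hcb B hBm
    refine ⟨_, ⟨⟨K, hK, hKc⟩, rfl⟩, _, ⟨∅, rfl⟩, ?_⟩
    rintro g ⟨F', -, rfl⟩
    apply hsub
    intro x hx
    have : (sumFn (f ⟨K, hK, hKc⟩) F').1 x = 0 :=
      Finset.sum_eq_zero fun O _ => (hf _ O).2.1 x (hBK hx)
    rw [this]
    simpa [zeroFn] using hε
  · intro ℰ hE hEc
    choose k hk using fun ξ : ℰ => hE ξ.2
    have hnc : ¬ IsBCover 𝔅 (range fun ξ : ℰ => G (k ξ)) := fun hc =>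
      hno ⟨_, by rintro _ ⟨ξ, rfl⟩; exact hGm _, Cardinal.mk_range_le.trans hEc, hc⟩
    unfold IsBCover at hnc
    push Not at hnc
    obtain ⟨B, hBm, hBn⟩ := hnc
    have hex : ∀ ξ : ℰ, ∃ O : 𝒪 (k ξ), ∃ x ∈ B, x ∉ O.1 := by
      intro ξ
      have h1 : ¬ B ⊆ G (k ξ) := hBn _ ⟨ξ, rfl⟩
      rw [hGeq] at h1
      by_contra! hcon
      exact h1 (subset_sInter fun O hO x hx => hcon ⟨O, hO⟩ x hx)
    choose O x hxB hxO using hex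
    refine ⟨fun ξ => if hξ : ξ ∈ ℰ then tailSet (f (k ⟨ξ, hξ⟩)) {O ⟨ξ, hξ⟩} else ∅, ?_, ?_⟩
    · intro ξ hξ
      simp only [hξ, dite_true]
      exact (hk ⟨ξ, hξ⟩).subset ⟨_, rfl⟩
    · letI := bornTopology 𝔅 hB
      intro hcl
      have hop : IsOpen {g : CFn X | ∃ δ > (0 : ℝ), ∀ x ∈ B, |g.1 x| ≤ 1 - δ} := by
        rintro g ⟨δ, hδ, hg⟩
        refine ⟨B, hBm, δ / 2, by linarith, fun g' hg' => ⟨δ / 2, by linarith, fun x hx => ?_⟩⟩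
        have h1 := hg x hx
        have h2 := hg' x hx
        have h3 := abs_sub_abs_le_abs_sub (g'.1 x) (g.1 x)
        rw [abs_sub_comm] at h3
        linarith
      obtain ⟨g, ⟨δ, hδ, hg⟩, hgU⟩ := mem_closure_iff.1 hcl _ hop
        ⟨1, one_pos, fun x _ => by simp [zeroFn]⟩
      simp only [mem_iUnion] at hgU
      obtain ⟨ξ, hξ, hgξ⟩ := hgU
      simp only [hξ, dite_true] at hgξ
      obtain ⟨F', hF', rfl⟩ := hgξ
      have h1 := hg _ (hxB ⟨ξ, hξ⟩)
      have h2 : (1 : ℝ) ≤ (sumFn (f (k ⟨ξ, hξ⟩)) F').1 (x ⟨ξ, hξ⟩) := by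
        rw [← (hf _ (O ⟨ξ, hξ⟩)).2.2 _ (hxO ⟨ξ, hξ⟩)]
        exact Finset.single_le_sum (f := fun i => (f (k ⟨ξ, hξ⟩) i).1 (x ⟨ξ, hξ⟩))
          (fun i _ => (hf _ i).1 _) (hF' (Finset.mem_singleton_self _))
      have h3 := le_abs_self ((sumFn (f (k ⟨ξ, hξ⟩)) F').1 (x ⟨ξ, hξ⟩))
      linarith
end

section
/- Let X be a Tychonoff topological space, let 𝔅 be a bornology with compact base on X, and let κ be an infinite cardinal. If every 𝔅-cover of X consisting of G_κ-sets has a 𝔅-subcover of cardinality at most κ, then no family of collections of subsets of C_𝔅(X) is κ-singular at the zero function 0̄. -/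
open Set Topology

universe u

/-- If every `𝔅`-cover of `X` by `G_κ`-sets has a `𝔅`-subcover of
cardinality at most `κ`, then no family of collections of subsets of `C_𝔅(X)` is
`κ`-singular at `0̄`. -/
theorem stmt7 {X : Type u} [TopologicalSpace X] [T35Space X]
    (𝔅 : Set (Set X)) (hB : IsBornology 𝔅) (hcb : HasCompactBase 𝔅)
    (κ : Cardinal.{u}) (hκ : Cardinal.aleph0 ≤ κ)
    (h : ∀ 𝒢 : Set (Set X), (∀ G ∈ 𝒢, IsGKappaSet κ G) → IsBCover 𝔅 𝒢 →
      ∃ 𝒢' ⊆ 𝒢, Cardinal.mk 𝒢' ≤ κ ∧ IsBCover 𝔅 𝒢') :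
    ∀ ℙ : Set (Set (Set (CFn X))),
      ¬ @KappaSingularAt (CFn X) (bornTopology 𝔅 hB) κ ℙ (zeroFn X) := by
  classical
  intro ℙ hP
  letI : TopologicalSpace (CFn X) := bornTopology 𝔅 hB
  obtain ⟨h1, h2, h3, h4⟩ := hP
  -- the G_κ-set associated with a set of functions and a natural number
  let G : ℕ → Set (CFn X) → Set X := fun n A => {x | ∀ g ∈ A, |g.1 x| < 1 / ((n : ℝ) + 1)}
  have hpos : ∀ n : ℕ, (0 : ℝ) < 1 / ((n : ℝ) + 1) := fun n => by positivity
  have hopen : ∀ K ∈ 𝔅, IsCompact K → ∀ ε > (0 : ℝ),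
      IsOpen (unifBall (zeroFn X) K ε) := by
    intro K hK hKc ε hε f hf
    rcases K.eq_empty_or_nonempty with rfl | hne
    · exact ⟨∅, hK, 1, one_pos, fun g _ x hx => absurd hx (by simp)⟩
    · have hcont : Continuous fun x => |(zeroFn X).1 x - f.1 x| :=
        ((zeroFn X).2.sub f.2).abs
      obtain ⟨x₀, hx₀, hmax⟩ := hKc.exists_isMaxOn hne hcont.continuousOn
      refine ⟨K, hK, ε - |(zeroFn X).1 x₀ - f.1 x₀|, sub_pos.2 (hf x₀ hx₀), ?_⟩
      intro g hg x hx
      have e1 := hg x hx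
      have e2 : |(zeroFn X).1 x - f.1 x| ≤ |(zeroFn X).1 x₀ - f.1 x₀| := hmax hx
      have e3 := abs_sub_le ((zeroFn X).1 x) (f.1 x) (g.1 x)
      linarith
  have hsub : ∀ n : ℕ, ∃ 𝒢' ⊆ {S : Set X | ∃ ξ ∈ ℙ, ∃ A ∈ ξ, S = G n A},
      Cardinal.mk 𝒢' ≤ κ ∧ IsBCover 𝔅 𝒢' := by
    intro n
    apply h
    · rintro S ⟨ξ, hξ, A, hA, rfl⟩
      refine ⟨(fun g : CFn X => {x | |g.1 x| < 1 / ((n : ℝ) + 1)}) '' A, ?_,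
        Cardinal.mk_image_le.trans (h1 ξ hξ A hA), ?_⟩
      · rintro O ⟨g, hg, rfl⟩
        exact isOpen_lt g.2.abs continuous_const
      · ext x
        simp [G]
    · intro B hBm
      obtain ⟨K, hK, hKc, hBK⟩ := hcb B hBm
      obtain ⟨ξ, hξ, A, hA, hAO⟩ := h3 _ (hopen K hK hKc _ (hpos n)) (by
        intro x hx
        simpa using hpos n)
      refine ⟨G n A, ⟨ξ, hξ, A, hA, rfl⟩, fun x hx g hg => ?_⟩
      have := hAO hg x (hBK hx)
      simpa [zeroFn] using this
  choose 𝒢 h𝒢 hcard hcov using hsub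
  have hξ : ∀ n (S : 𝒢 n), ∃ ξ ∈ ℙ, ∃ A ∈ ξ, S.1 = G n A := fun n S => h𝒢 n S.2
  choose ξ hξP A hA hS using hξ
  obtain ⟨c, hc, hcl⟩ := h4 (⋃ n : ULift.{u} ℕ, range (ξ n.down))
    (by
      intro y hy
      obtain ⟨n, S, rfl⟩ := mem_iUnion.1 hy
      exact hξP _ _)
    (by
      refine (Cardinal.mk_iUnion_le _).trans ?_
      refine (mul_le_mul' (b := κ) (d := κ) ?_ ?_).trans (Cardinal.mul_eq_self hκ).le
      · simpa using hκ
      · exact ciSup_le' fun n => Cardinal.mk_range_le.trans (hcard n.down))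
  obtain ⟨B, hBm, ε, hε, hball⟩ :=
    (isClosed_closure (s := ⋃ ξ' ∈ ⋃ n : ULift.{u} ℕ, range (ξ n.down), c ξ')).isOpen_compl
      (zeroFn X) hcl
  obtain ⟨n, hn⟩ := exists_nat_one_div_lt hε
  obtain ⟨S, hSm, hBS⟩ := hcov n B hBm
  have hmem : ξ n ⟨S, hSm⟩ ∈ ⋃ n : ULift.{u} ℕ, range (ξ n.down) :=
    mem_iUnion.2 ⟨⟨n⟩, mem_range_self _⟩
  obtain ⟨g, hg⟩ := h2 _ (hξP n ⟨S, hSm⟩) {c (ξ n ⟨S, hSm⟩), A n ⟨S, hSm⟩} (by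
    intro y hy
    simp only [Finset.coe_insert, Finset.coe_singleton, mem_insert_iff,
      mem_singleton_iff] at hy
    rcases hy with rfl | rfl
    · exact hc _ hmem
    · exact hA _ _)
  have hg1 : g ∈ c (ξ n ⟨S, hSm⟩) := hg _ (by simp)
  have hg2 : g ∈ A n ⟨S, hSm⟩ := hg _ (by simp)
  refine hball (a := g) ?_ (subset_closure (mem_biUnion hmem hg1))
  intro x hx
  have hxG : x ∈ G n (A n ⟨S, hSm⟩) := by
    rw [← hS n ⟨S, hSm⟩]
    exact hBS hx
  have := hxG g hg2
  simpa [zeroFn] using this.trans hn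
end
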